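/- Let N ≥ 2 and let u(t) = ∑_{j=1}^{N} a⁰_j·cos((2j−1)t) with a⁰_j = ((N−j+2)·sin(πj/(N+1)) − (N−j+1)·sin(π(j−1)/(N+1)))/((N+1)·sin(π/(N+1))). Then u is positive and strictly decreasing on the interval (0, 3π/(2N+2)): for all 0 < t₁ < t₂ < 3π/(2N+2), u(t₁) > u(t₂) > 0. -/

import Mathlib

/-!
Put `θ = π / (N + 1)` and `D = cos 2t - cos θ`. Summation by parts writes `(N + 1) sin θ u(t)` as a
combination of `∑ (N + 1 - k) sin kθ sin 2kt` and `∑ sin kθ cos 2kt`. Both sums telescope after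
multiplication by `D`, and together they give
`(N + 1) D² u(t) = 2 (1 - cos θ) cos t cos² ((N + 1) t)`.
Cancelling `D`, which by analyticity is legitimate at its zeros too, removes the outermost zeros
`± cos (θ / 2)` from `cos ((N + 1) t) = T_{N+1} (cos t)`, so `u(t)` is a positive multiple of
`cos t` times the square of `∏ (cos t - xₖ)`, where `xₖ` runs over the inner zeros. The
largest of them is `cos (3π / (2N + 2))`, and to the right of it every factor is positive and
increasing in `cos t`.
-/

open Real Finset

section TrigonometricSums

/-- A Christoffel–Darboux formula: both factors solve `y (k + 1) + y (k - 1) = 2 c * y k`, with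
`c = cos θ` and `c = cos x` respectively. -/
theorem two_mul_cos_sub_cos_mul_sum_sin_mul_sin_add (θ x φ : ℝ) (n : ℕ) :
    2 * (cos x - cos θ) * ∑ k ∈ range (n + 1), sin (k * θ) * sin (k * x + φ) =
      sin θ * sin φ + sin (n * θ) * sin ((n + 1) * x + φ) -
        sin ((n + 1) * θ) * sin (n * x + φ) := by
  induction n with
  | zero => simp
  | succ n ih =>
    have θ_prev : sin (n * θ) = sin ((n + 1) * θ - θ) := by ring_nf
    have θ_next : sin ((n + 1 + 1) * θ) = sin ((n + 1) * θ + θ) := by ring_nf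
    have x_prev : sin (n * x + φ) = sin ((n + 1) * x + φ - x) := by ring_nf
    have x_next : sin ((n + 1 + 1) * x + φ) = sin ((n + 1) * x + φ + x) := by ring_nf
    rw [sum_range_succ, mul_add, ih]
    push_cast
    rw [θ_prev, θ_next, x_prev, x_next, sin_add _ θ, sin_sub _ θ, sin_add _ x, sin_sub _ x]
    ring

theorem two_mul_cos_sub_cos_mul_sum_sin_mul_sin (θ x : ℝ) (n : ℕ) :
    2 * (cos x - cos θ) * ∑ k ∈ range (n + 1), sin (k * θ) * sin (k * x) =
      sin (n * θ) * sin ((n + 1) * x) - sin ((n + 1) * θ) * sin (n * x) := by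
  simpa using two_mul_cos_sub_cos_mul_sum_sin_mul_sin_add θ x 0 n

theorem two_mul_cos_sub_cos_mul_sum_sin_mul_cos (θ x : ℝ) (n : ℕ) :
    2 * (cos x - cos θ) * ∑ k ∈ range (n + 1), sin (k * θ) * cos (k * x) =
      sin θ + sin (n * θ) * cos ((n + 1) * x) - sin ((n + 1) * θ) * cos (n * x) := by
  simpa [sin_add_pi_div_two] using two_mul_cos_sub_cos_mul_sum_sin_mul_sin_add θ x (π / 2) n

theorem two_mul_cos_sub_cos_mul_sum_sub_mul_sin_mul_sin (θ x : ℝ) (n : ℕ) :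
    2 * (cos x - cos θ) * ∑ k ∈ range (n + 1), (n + 1 - k) * (sin (k * θ) * sin (k * x)) =
      2 * sin x * ∑ k ∈ range (n + 1), sin (k * θ) * cos (k * x) -
        sin ((n + 1) * θ) * sin (n * x) := by
  induction n with
  | zero => simp
  | succ n ih =>
    have increment :
        ∑ k ∈ range (n + 1 + 1), ((n + 1 : ℕ) + 1 - k) * (sin (k * θ) * sin (k * x)) =
          ∑ k ∈ range (n + 1), (n + 1 - k) * (sin (k * θ) * sin (k * x)) +
            ∑ k ∈ range (n + 1 + 1), sin (k * θ) * sin (k * x) := by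
      rw [sum_range_succ, sum_range_succ _ (n + 1), ← add_assoc, ← sum_add_distrib]
      push_cast
      congr 1
      · exact sum_congr rfl fun k _ => by ring
      · ring
    have sin_next : sin ((n + 1 + 1) * x) = sin ((n + 1) * x + x) := by ring_nf
    have sin_prev : sin (n * x) = sin ((n + 1) * x - x) := by ring_nf
    rw [increment, mul_add, ih, two_mul_cos_sub_cos_mul_sum_sin_mul_sin,
      sum_range_succ _ (n + 1)]
    push_cast
    rw [sin_next, sin_prev, sin_add _ x, sin_sub _ x]
    ring

/-- The weight `ν` is kept independent of `n` for the induction; the boundary term vanishes for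
`ν = n + 1`. -/
theorem sum_Icc_sub_mul_cos_eq (ν θ t : ℝ) (n : ℕ) :
    ∑ j ∈ Icc 1 n, ((ν - j + 1) * sin (j * θ) - (ν - j) * sin ((j - 1) * θ)) *
        cos ((2 * j - 1) * t) =
      2 * sin t * ∑ k ∈ range (n + 1), (ν - k) * (sin (k * θ) * sin (k * (2 * t))) +
        2 * cos t * ∑ k ∈ range (n + 1), sin (k * θ) * cos (k * (2 * t)) +
        (ν - n - 1) * sin (n * θ) * cos ((2 * n + 1) * t) := by
  induction n with
  | zero => simp
  | succ n ih =>
    have cos_sub_form : cos ((2 * n + 1) * t) = cos ((n + 1) * (2 * t) - t) := by ring_nf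
    have cos_sub_form' : cos ((2 * (n + 1) - 1) * t) = cos ((n + 1) * (2 * t) - t) := by ring_nf
    have cos_add_form : cos ((2 * (n + 1) + 1) * t) = cos ((n + 1) * (2 * t) + t) := by ring_nf
    rw [sum_Icc_succ_top (by lia), ih, sum_range_succ _ (n + 1), sum_range_succ _ (n + 1)]
    push_cast
    rw [cos_sub_form, cos_sub_form', cos_add_form, cos_add, cos_sub, add_sub_cancel_right]
    ring

theorem two_mul_cos_sub_cos_mul_sum_Icc_of_sin_eq_zero {θ : ℝ} {n : ℕ}
    (hθ : sin ((n + 1) * θ) = 0) (t : ℝ) :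
    2 * (cos (2 * t) - cos θ) *
        ∑ j ∈ Icc 1 n, ((n + 1 - j + 1) * sin (j * θ) - (n + 1 - j) * sin ((j - 1) * θ)) *
          cos ((2 * j - 1) * t) =
      4 * (1 - cos θ) * cos t * ∑ k ∈ range (n + 1), sin (k * θ) * cos (k * (2 * t)) := by
  have weighted := two_mul_cos_sub_cos_mul_sum_sub_mul_sin_mul_sin θ (2 * t) n
  rw [hθ, sin_two_mul] at weighted
  rw [cos_two_mul] at weighted ⊢
  rw [sum_Icc_sub_mul_cos_eq]
  linear_combination 2 * sin t * weighted + 8 * cos t *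
    (∑ k ∈ range (n + 1), sin (k * θ) * cos (k * (2 * t))) * sin_sq_add_cos_sq t

end TrigonometricSums

theorem eqOn_of_analyticOnNhd_of_mul_eq_mul_left {𝕜 A : Type*} [NontriviallyNormedField 𝕜]
    [NormedRing A] [IsDomain A] [NormedAlgebra 𝕜 A] {d f g : 𝕜 → A} {U : Set 𝕜}
    (hU : IsPreconnected U) (hd : AnalyticOnNhd 𝕜 d U) (hf : AnalyticOnNhd 𝕜 f U)
    (hg : AnalyticOnNhd 𝕜 g U) (hd_ne : ∃ z ∈ U, d z ≠ 0)
    (h : ∀ z ∈ U, d z * f z = d z * g z) : Set.EqOn f g U := by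
  have mul_sub_eq_zero : ∀ z ∈ U, d z * (f - g) z = 0 := fun z hz => by
    rw [Pi.sub_apply, mul_sub, h z hz, sub_self]
  obtain ⟨z, hz, hdz⟩ := hd_ne
  have sub_eq_zero_on := (hd.eq_zero_or_eq_zero_of_mul_eq_zero (hf.sub hg) mul_sub_eq_zero
    hU).resolve_left fun d_eq_zero => hdz (d_eq_zero z hz)
  exact fun w hw => sub_eq_zero.mp (sub_eq_zero_on w hw)

section ChebyshevZeros

/-- The zeros of the Chebyshev polynomial `T_{N+1}`, in decreasing order for `0 ≤ k ≤ N`. -/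
noncomputable def chebyshevZero (N k : ℕ) : ℝ :=
  cos ((2 * k + 1) * π / (2 * N + 2))

/-- The monic polynomial function whose roots are the zeros of `T_{N+1}` other than the largest and
the smallest one. -/
noncomputable def innerChebyshev (N : ℕ) (y : ℝ) : ℝ :=
  ∏ k ∈ Ico 1 N, (y - chebyshevZero N k)

theorem cos_nat_mul_eq_prod (n : ℕ) (t : ℝ) :
    cos (n * t) = 2 ^ (n - 1) * ∏ k ∈ range n, (cos t - cos ((2 * k + 1) * π / (2 * n))) := by
  have injOn_zeros : Set.InjOn (fun k : ℕ => cos ((2 * k + 1) * π / (2 * n))) (range n) :=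
    (range n).nodup_map_iff_injOn.mp (Polynomial.Chebyshev.roots_T_real_nodup n)
  have splits : (Polynomial.Chebyshev.T ℝ n).Splits := by
    rw [Polynomial.splits_iff_card_roots, Polynomial.Chebyshev.roots_T_real, card_val,
      card_image_of_injOn injOn_zeros]
    simp
  have factored := splits.eval_eq_prod_roots (cos t)
  rw [Polynomial.Chebyshev.T_real_cos, Polynomial.Chebyshev.roots_T_real,
    Polynomial.Chebyshev.leadingCoeff_T, Int.cast_natCast, Int.natAbs_natCast] at factored
  exact factored.trans (congrArg _ (prod_image injOn_zeros))

theorem chebyshevZero_one (N : ℕ) : chebyshevZero N 1 = cos (3 * π / (2 * N + 2)) := by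
  norm_num [chebyshevZero]

theorem chebyshevZero_self (N : ℕ) : chebyshevZero N N = -chebyshevZero N 0 := by
  rw [chebyshevZero, chebyshevZero, ← cos_pi_sub]
  congr 1
  push_cast
  field_simp
  ring

theorem cos_two_mul_sub_cos_eq (N : ℕ) (t : ℝ) :
    cos (2 * t) - cos (π / (N + 1)) =
      2 * ((cos t - chebyshevZero N 0) * (cos t - chebyshevZero N N)) := by
  have double : π / (N + 1) = 2 * ((2 * (0 : ℕ) + 1) * π / (2 * N + 2)) := by
    push_cast
    field_simp
    ring
  rw [chebyshevZero_self, double, cos_two_mul, cos_two_mul, ← chebyshevZero]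
  ring

theorem two_mul_cos_succ_mul {N : ℕ} (hN : 0 < N) (t : ℝ) :
    2 * cos ((N + 1) * t) =
      2 ^ N * (cos (2 * t) - cos (π / (N + 1))) * innerChebyshev N (cos t) := by
  have factored : cos ((N + 1) * t) = 2 ^ N * ∏ k ∈ range (N + 1), (cos t - chebyshevZero N k) := by
    simpa [chebyshevZero, mul_add] using cos_nat_mul_eq_prod (N + 1) t
  rw [factored, prod_range_succ, prod_range_eq_mul_Ico _ hN, ← innerChebyshev,
    cos_two_mul_sub_cos_eq]
  ring

theorem chebyshevZero_antitoneOn (N : ℕ) : AntitoneOn (chebyshevZero N) (Set.Iic N) := by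
  intro k _ l (hl : l ≤ N) hkl
  refine cos_le_cos_of_nonneg_of_le_pi (by positivity) ?_ (by gcongr)
  rw [div_le_iff₀ (by positivity), mul_comm]
  gcongr
  exact one_le_two

theorem chebyshevZero_le_one_of_mem_Ico {N k : ℕ} (hk : k ∈ Ico 1 N) :
    chebyshevZero N k ≤ chebyshevZero N 1 := by
  obtain ⟨one_le, lt⟩ := mem_Ico.mp hk
  exact chebyshevZero_antitoneOn N (one_le.trans lt.le) lt.le one_le

theorem innerChebyshev_pos {N : ℕ} {y : ℝ} (hy : chebyshevZero N 1 < y) :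
    0 < innerChebyshev N y :=
  prod_pos fun _ hk => sub_pos.mpr ((chebyshevZero_le_one_of_mem_Ico hk).trans_lt hy)

theorem innerChebyshev_nonneg {N : ℕ} {y : ℝ} (hy : chebyshevZero N 1 ≤ y) :
    0 ≤ innerChebyshev N y :=
  prod_nonneg fun _ hk => sub_nonneg.mpr ((chebyshevZero_le_one_of_mem_Ico hk).trans hy)

theorem innerChebyshev_monotoneOn (N : ℕ) :
    MonotoneOn (innerChebyshev N) (Set.Ici (chebyshevZero N 1)) := fun _ hx _ _ hxy =>
  prod_le_prod (fun _ hk => sub_nonneg.mpr ((chebyshevZero_le_one_of_mem_Ico hk).trans hx))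
    fun _ _ => sub_le_sub_right hxy _

theorem analyticAt_innerChebyshev (N : ℕ) (y : ℝ) : AnalyticAt ℝ (innerChebyshev N) y := by
  unfold innerChebyshev
  fun_prop

end ChebyshevZeros

section ExtremalPolynomial

/-- The coefficient `a⁰_j` of `z ^ (2 * j - 1)` in the extremal polynomial `F⁰` of degree
`2 * N - 1`. -/
noncomputable def extremalCoeff (N j : ℕ) : ℝ :=
  ((N - j + 2) * sin (π * j / (N + 1)) - (N - j + 1) * sin (π * (j - 1) / (N + 1))) /
    ((N + 1) * sin (π / (N + 1)))

/-- The boundary value `Re F⁰(exp (i t))` of the extremal polynomial. -/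
noncomputable def extremalRe (N : ℕ) (t : ℝ) : ℝ :=
  ∑ j ∈ Icc 1 N, extremalCoeff N j * cos ((2 * j - 1) * t)

theorem sin_pi_div_succ_pos {N : ℕ} (hN : 0 < N) : 0 < sin (π / (N + 1)) := by
  refine sin_pos_of_pos_of_lt_pi (by positivity) (div_lt_self pi_pos ?_)
  exact_mod_cast Nat.lt_add_of_pos_left hN

theorem one_sub_cos_pi_div_succ_pos {N : ℕ} (hN : 0 < N) : 0 < 1 - cos (π / (N + 1)) := by
  have sin_sq_pos := pow_pos (sin_pi_div_succ_pos hN) 2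
  nlinarith [sin_sq_add_cos_sq (π / ((N : ℝ) + 1)), neg_one_le_cos (π / ((N : ℝ) + 1))]

theorem mul_extremalRe {N : ℕ} (hN : 0 < N) (t : ℝ) :
    (N + 1) * sin (π / (N + 1)) * extremalRe N t =
      ∑ j ∈ Icc 1 N, ((N + 1 - j + 1) * sin (j * (π / (N + 1))) -
        (N + 1 - j) * sin ((j - 1) * (π / (N + 1)))) * cos ((2 * j - 1) * t) := by
  have sin_ne := (sin_pi_div_succ_pos hN).ne'
  rw [extremalRe, mul_sum]
  refine sum_congr rfl fun j _ => ?_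
  rw [extremalCoeff, ← mul_assoc, mul_div_cancel₀ _ (by positivity)]
  ring_nf

theorem cos_sub_cos_sq_mul_extremalRe {N : ℕ} (hN : 0 < N) (t : ℝ) :
    (cos (2 * t) - cos (π / (N + 1))) ^ 2 * ((N + 1) * extremalRe N t) =
      2 * (1 - cos (π / (N + 1))) * cos t * cos ((N + 1) * t) ^ 2 := by
  set θ := π / ((N : ℝ) + 1) with hθ
  have succ_mul : (N + 1) * θ = π := by rw [hθ]; field_simp
  have sin_succ_mul : sin ((N + 1) * θ) = 0 := by rw [succ_mul, sin_pi]
  have sin_mul : sin (N * θ) = sin θ := by rw [← sin_pi_sub, ← succ_mul]; ring_nf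
  have parts := two_mul_cos_sub_cos_mul_sum_Icc_of_sin_eq_zero sin_succ_mul t
  have telescoped := two_mul_cos_sub_cos_mul_sum_sin_mul_cos θ (2 * t) N
  rw [← mul_extremalRe hN] at parts
  rw [sin_succ_mul, sin_mul, mul_left_comm _ 2 t, cos_two_mul ((N + 1) * t)] at telescoped
  refine mul_left_cancel₀ (sin_pi_div_succ_pos hN).ne' ?_
  linear_combination (cos (2 * t) - cos θ) / 2 * parts + (1 - cos θ) * cos t * telescoped

theorem exists_cos_two_mul_ne (c : ℝ) : ∃ t, cos (2 * t) ≠ c := by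
  by_contra! h
  have at_zero := h 0
  have at_half_pi := h (π / 2)
  rw [mul_zero, cos_zero] at at_zero
  rw [mul_div_cancel₀ _ two_ne_zero, cos_pi] at at_half_pi
  linarith

theorem extremalRe_eq {N : ℕ} (hN : 0 < N) (t : ℝ) :
    extremalRe N t =
      (1 - cos (π / (N + 1))) / (2 * (N + 1)) * cos t * (2 ^ N * innerChebyshev N (cos t)) ^ 2 := by
  obtain ⟨s, hs⟩ := exists_cos_two_mul_ne (cos (π / (N + 1)))
  have analytic_left : AnalyticOnNhd ℝ (extremalRe N) Set.univ := fun t _ => by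
    unfold extremalRe
    fun_prop
  have analytic_inner (t : ℝ) : AnalyticAt ℝ (fun t => innerChebyshev N (cos t)) t :=
    (analyticAt_innerChebyshev N _).comp analyticAt_cos
  have analytic_right : AnalyticOnNhd ℝ (fun t => (1 - cos (π / (N + 1))) / (2 * (N + 1)) * cos t *
      (2 ^ N * innerChebyshev N (cos t)) ^ 2) Set.univ := fun t _ => by fun_prop
  refine eqOn_of_analyticOnNhd_of_mul_eq_mul_left isPreconnected_univ
    (d := fun t => (cos (2 * t) - cos (π / (N + 1))) ^ 2) (fun t _ => by fun_prop)
    analytic_left analytic_right ⟨s, trivial, pow_ne_zero 2 (sub_ne_zero.mpr hs)⟩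
    (fun t _ => ?_) (Set.mem_univ t)
  have closed_form := cos_sub_cos_sq_mul_extremalRe hN t
  refine mul_left_cancel₀ (Nat.cast_add_one_ne_zero (R := ℝ) N) ?_
  calc (N + 1) * ((cos (2 * t) - cos (π / (N + 1))) ^ 2 * extremalRe N t)
      = (1 - cos (π / (N + 1))) / 2 * cos t * (2 * cos ((N + 1) * t)) ^ 2 := by
        linear_combination closed_form
    _ = _ := by
        rw [two_mul_cos_succ_mul hN]
        field_simp

theorem three_mul_pi_div_le_pi_div_two {N : ℕ} (hN : 2 ≤ N) : 3 * π / (2 * N + 2) ≤ π / 2 := by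
  have hN' : (2 : ℝ) ≤ N := by exact_mod_cast hN
  rw [div_le_div_iff₀ (by positivity) two_pos]
  nlinarith [pi_pos]

theorem innerChebyshev_cos_pos {N : ℕ} (hN : 2 ≤ N) {t : ℝ}
    (ht : t ∈ Set.Ico 0 (3 * π / (2 * N + 2))) : 0 < innerChebyshev N (cos t) := by
  apply innerChebyshev_pos
  rw [chebyshevZero_one]
  exact cos_lt_cos_of_nonneg_of_le_pi_div_two ht.1 (three_mul_pi_div_le_pi_div_two hN) ht.2

theorem extremalRe_pos {N : ℕ} (hN : 2 ≤ N) {t : ℝ} (ht : t ∈ Set.Ico 0 (3 * π / (2 * N + 2))) :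
    0 < extremalRe N t := by
  have ht_lt : t < π / 2 := ht.2.trans_le (three_mul_pi_div_le_pi_div_two hN)
  have cos_pos : 0 < cos t := cos_pos_of_mem_Ioo ⟨by linarith [ht.1, pi_pos], ht_lt⟩
  have inner_pos := innerChebyshev_cos_pos hN ht
  have const_pos := one_sub_cos_pi_div_succ_pos (two_pos.trans_le hN)
  rw [extremalRe_eq (two_pos.trans_le hN)]
  positivity

theorem extremalRe_strictAntiOn {N : ℕ} (hN : 2 ≤ N) :
    StrictAntiOn (extremalRe N) (Set.Icc 0 (3 * π / (2 * N + 2))) := by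
  intro t ht s hs hts
  have end_le := three_mul_pi_div_le_pi_div_two hN
  have cos_nonneg : 0 ≤ cos s :=
    cos_nonneg_of_mem_Icc ⟨by linarith [hs.1, pi_pos], hs.2.trans end_le⟩
  have cos_lt : cos s < cos t :=
    cos_lt_cos_of_nonneg_of_le_pi_div_two ht.1 (hs.2.trans end_le) hts
  have zero_le_cos : chebyshevZero N 1 ≤ cos s := by
    rw [chebyshevZero_one]
    exact cos_le_cos_of_nonneg_of_le_pi hs.1 (by linarith [pi_pos]) hs.2
  have inner_nonneg := innerChebyshev_nonneg zero_le_cos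
  have inner_pos := innerChebyshev_cos_pos hN ⟨ht.1, hts.trans_le hs.2⟩
  have inner_le := innerChebyshev_monotoneOn N zero_le_cos (zero_le_cos.trans cos_lt.le) cos_lt.le
  have const_pos := one_sub_cos_pi_div_succ_pos (two_pos.trans_le hN)
  rw [extremalRe_eq (two_pos.trans_le hN), extremalRe_eq (two_pos.trans_le hN)]
  calc _ ≤ (1 - cos (π / (N + 1))) / (2 * (N + 1)) * cos s *
        (2 ^ N * innerChebyshev N (cos t)) ^ 2 := by gcongr
    _ < _ := by gcongr

end ExtremalPolynomial

theorem extremal_re_pos_decreasing (N : ℕ) (hN : 2 ≤ N) (a0 : ℕ → ℝ)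
    (ha0 : ∀ j, a0 j =
      (((N : ℝ) - j + 2) * Real.sin (π * j / (N + 1)) -
        ((N : ℝ) - j + 1) * Real.sin (π * (j - 1) / (N + 1))) /
      ((N + 1) * Real.sin (π / (N + 1))))
    (u : ℝ → ℝ)
    (hu : ∀ t, u t = ∑ j ∈ Finset.Icc 1 N, a0 j * Real.cos ((2 * (j : ℝ) - 1) * t)) :
    ∀ t₁ t₂ : ℝ, 0 < t₁ → t₁ < t₂ → t₂ < 3 * π / (2 * N + 2) →
      u t₁ > u t₂ ∧ u t₂ > 0 := by
  obtain rfl : a0 = extremalCoeff N := funext ha0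
  obtain rfl : u = extremalRe N := funext hu
  intro t₁ t₂ ht₁ ht₁₂ ht₂
  have ht₂_pos := ht₁.trans ht₁₂
  exact ⟨extremalRe_strictAntiOn hN ⟨ht₁.le, (ht₁₂.trans ht₂).le⟩ ⟨ht₂_pos.le, ht₂.le⟩ ht₁₂,
    extremalRe_pos hN ⟨ht₂_pos.le, ht₂⟩⟩
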